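/- arXiv:1711.00850 — 3 statements merged into one kernel-verified Lean document; each statement's English description precedes it below -/
import Mathlib

section
/- Let k be a positive integer and let λ be a real number with λ ≠ 1. Then for every real t with |λ²t/(λ-1)| < 1, the series Σ_{n=0}^∞ Y(n,k,λ) tⁿ/n! converges and equals (2/(λ(1+λt)-1))^k; in other words, the numbers Y(n,k,λ) = (-1)ⁿ · C(k+n-1, n) · 2^k · n! · λ^{2n} / (λ-1)^{k+n} are exactly the coefficients in the Maclaurin expansion of the generating function F(t,k;λ) = (2/(λ(1+λt)-1))^k. -/
/-- The higher-order numbers `Y_n^{(k)}(λ)` of Kucukoglu–Simsek, given by their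
explicit formula `Y(n,k,λ) = (-1)^n C(k+n-1,n) 2^k n! λ^(2n) / (λ-1)^(k+n)`. -/
noncomputable def Y (n k : ℕ) (l : ℝ) : ℝ :=
  (-1 : ℝ) ^ n * (Nat.choose (k + n - 1) n : ℝ) * 2 ^ k * (Nat.factorial n : ℝ) *
    l ^ (2 * n) / (l - 1) ^ (k + n)

/-- The numbers `Y(n,k,λ)` are exactly the Maclaurin coefficients of the generating
function `F(t,k;λ) = (2/(λ(1+λt)-1))^k`. -/
theorem stmt_0 (k : ℕ) (hk : 0 < k) (l : ℝ) (hl : l ≠ 1) (t : ℝ)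
    (ht : |l ^ 2 * t / (l - 1)| < 1) :
    HasSum (fun n : ℕ => Y n k l * t ^ n / (Nat.factorial n : ℝ))
      ((2 / (l * (1 + l * t) - 1)) ^ k) := by
  obtain ⟨m, rfl⟩ : ∃ m, k = m + 1 := ⟨k - 1, by omega⟩
  have hl' : l - 1 ≠ 0 := sub_ne_zero.mpr hl
  have hr : ‖-(l ^ 2 * t / (l - 1))‖ < 1 := by
    rw [norm_neg, Real.norm_eq_abs]
    exact ht
  have h := (hasSum_choose_mul_geometric_of_norm_lt_one m hr).mul_left ((2 / (l - 1)) ^ (m + 1))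
  have hv : (2 / (l * (1 + l * t) - 1)) ^ (m + 1)
      = (2 / (l - 1)) ^ (m + 1) * (1 / (1 - -(l ^ 2 * t / (l - 1))) ^ (m + 1)) := by
    rw [← one_div_pow, ← mul_pow]
    congr 1
    have e : l * (1 + l * t) - 1 = (l - 1) * (1 - -(l ^ 2 * t / (l - 1))) := by
      field_simp
      ring
    rw [e, div_mul_div_comm, mul_one]
  rw [hv]
  suffices hfun : (fun n : ℕ => Y n (m + 1) l * t ^ n / (Nat.factorial n : ℝ)) =
      fun i : ℕ => (2 / (l - 1)) ^ (m + 1) *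
        (((i + m).choose m : ℝ) * (-(l ^ 2 * t / (l - 1))) ^ i) by
    rw [hfun]
    exact h
  funext n
  have hc : (m + 1 + n - 1).choose n = (n + m).choose m := by
    have : m + 1 + n - 1 = n + m := by omega
    rw [this]
    exact Nat.choose_symm_add
  have hf : (Nat.factorial n : ℝ) ≠ 0 := by positivity
  unfold Y
  rw [hc, neg_pow (l ^ 2 * t / (l - 1)), div_pow, div_pow, mul_pow, ← pow_mul, pow_add (l - 1) (m + 1) n]
  field_simp
end

section
/- Let n and v be nonnegative integers, k a positive integer, and λ a real number with λ ≠ 1. Then Y(n+v, k, λ) = ((-1)^v · k^{(v)} · λ^{2v} / 2^v) · Y(n, k+v, λ), where k^{(v)} = k(k+1)(k+2)⋯(k+v-1) is the rising factorial. -/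
/-- `Y(n+v,k,λ) = ((-1)^v k^{(v)} λ^{2v} / 2^v) · Y(n,k+v,λ)`, where
`k^{(v)} = k(k+1)⋯(k+v-1)` is the rising factorial. -/
theorem stmt_9 (n v k : ℕ) (hk : 0 < k) (l : ℝ) (hl : l ≠ 1) :
    Y (n + v) k l =
      (-1 : ℝ) ^ v * (Nat.ascFactorial k v : ℝ) * l ^ (2 * v) / 2 ^ v * Y n (k + v) l := by
  have h1 := Nat.ascFactorial_eq_factorial_mul_choose' k (n + v)
  have h2 := Nat.ascFactorial_eq_factorial_mul_choose' (k + v) n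
  have h3 := Nat.ascFactorial_mul_ascFactorial k v n
  rw [Nat.add_comm v n, h1, h2] at h3
  have h4 : (k.ascFactorial v : ℝ) *
      ((n.factorial : ℝ) * ((k + v + n - 1).choose n : ℝ)) =
      ((n + v).factorial : ℝ) * ((k + (n + v) - 1).choose (n + v) : ℝ) := by
    exact_mod_cast h3
  have hl' : l - 1 ≠ 0 := sub_ne_zero.mpr hl
  have h5 : k + v + n = k + (n + v) := by omega
  unfold Y
  calc _ = (-1 : ℝ) ^ (n + v) * (((n + v).factorial : ℝ) *
        ((k + (n + v) - 1).choose (n + v) : ℝ)) * 2 ^ k * l ^ (2 * (n + v)) /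
        (l - 1) ^ (k + (n + v)) := by ring
    _ = _ := by
      rw [← h4, h5]
      field_simp
      ring
end

section
/- Let n be a positive integer, k a positive integer, and λ₀ a real number with λ₀ ≠ 1. Then the function λ ↦ Y(n,k,λ) is differentiable at λ₀ and its derivative there equals -(k/2) · ( 2λ₀ · n · Y(n-1, k+1, λ₀) + Y(n, k+1, λ₀) ). -/
/-- Derivative formula for `λ ↦ Y(n,k,λ)`. -/
theorem stmt_10 (n k : ℕ) (hn : 0 < n) (hk : 0 < k) (l₀ : ℝ) (hl : l₀ ≠ 1) :
    HasDerivAt (fun l : ℝ => Y n k l)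
      (-((k : ℝ) / 2) * (2 * l₀ * (n : ℝ) * Y (n - 1) (k + 1) l₀ + Y n (k + 1) l₀)) l₀ := by
  obtain ⟨m, rfl⟩ : ∃ m, n = m + 1 := ⟨n - 1, by omega⟩
  obtain ⟨j, rfl⟩ : ∃ j, k = j + 1 := ⟨k - 1, by omega⟩
  have hs : l₀ - 1 ≠ 0 := sub_ne_zero.mpr hl
  have h1 : ((j + m + 1).choose (m + 1) : ℝ) * (m + 1) = ((j + m + 1).choose m : ℝ) * (j + 1) := by
    have h := Nat.choose_succ_right_eq (j + m + 1) m
    rw [show j + m + 1 - m = j + 1 by omega] at h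
    exact_mod_cast h
  have h2 : ((j + m + 1).choose (m + 1) : ℝ) * (j + m + 2)
      = ((j + m + 2).choose (m + 1) : ℝ) * (j + 1) := by
    have h := Nat.choose_mul_succ_eq (j + m + 1) (m + 1)
    rw [show j + m + 1 + 1 - (m + 1) = j + 1 by omega] at h
    exact_mod_cast h
  unfold Y
  rw [show j + 1 + (m + 1) - 1 = j + m + 1 by omega,
    show j + 1 + 1 + (m + 1 - 1) - 1 = j + m + 1 by omega,
    show j + 1 + 1 + (m + 1) - 1 = j + m + 2 by omega,
    show m + 1 - 1 = m by omega,
    show j + 1 + (m + 1) = j + m + 2 by omega,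
    show j + 1 + 1 + m = j + m + 2 by omega,
    show j + 1 + 1 + (m + 1) = j + m + 3 by omega]
  have hd := (((hasDerivAt_pow (2 * (m + 1)) l₀).const_mul
    ((-1 : ℝ) ^ (m + 1) * ((j + m + 1).choose (m + 1) : ℝ) * 2 ^ (j + 1)
      * ((m + 1).factorial : ℝ))).div
    (((hasDerivAt_id l₀).sub_const 1).pow (j + m + 2)) (pow_ne_zero _ hs))
  refine hd.congr_deriv ?_
  simp only [id, Pi.pow_apply]
  rw [show 2 * (m + 1) - 1 = 2 * m + 1 by omega, show j + m + 2 - 1 = j + m + 1 by omega,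
    Nat.factorial_succ]
  push_cast
  generalize ((j + m + 1).choose (m + 1) : ℝ) = A at *
  generalize ((j + m + 1).choose m : ℝ) = B at *
  generalize ((j + m + 2).choose (m + 1) : ℝ) = C at *
  have hj : (j : ℝ) + 1 ≠ 0 := by positivity
  have hB : B = A * (m + 1) / (j + 1) := by field_simp; linarith
  have hC : C = A * (j + m + 2) / (j + 1) := by field_simp; linarith
  subst hB hC
  generalize hS : l₀ - 1 = s at *
  field_simp
  ring
end
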